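/- arXiv:1407.4318 — 3 statements merged into one kernel-verified Lean document; each statement's English description precedes it below -/
import Mathlib

section
/- Let 𝒳, 𝒴, 𝒵 be finite nonempty sets, let P be a joint probability mass function on 𝒳×𝒴×𝒵 such that X–Y–Z is a Markov chain, and let Q(·|z) be a probability mass function on 𝒳 for each z ∈ 𝒵 with Q(x|z) > 0 for all x, z. Then ED(P_{X|Y}‖Q_{X|Z}) ≥ H(X|Z) − H(X|Y). -/
/-!
Under the Markov condition `P(y,z) P(x|y) = P(x,y,z)`, so the expected divergence is
`∑ P(x,y,z) (log P(x|y) - log Q(x|z))`, whose first part is `-H(X|Y)`. What remains of the claim is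
`∑ P(x,z) (log P(x|z) - log Q(x|z)) ≥ 0`, which is Gibbs' inequality; it follows by summing
`a log (a / b) ≥ a - b` with `a = P(x,z)` and `b = P(z) Q(x|z)`.
-/

open Finset Real

noncomputable section

/-- Marginal `P(y)` of a joint pmf on `𝒳 × 𝒴 × 𝒵`. -/
def margY {𝒳 𝒴 𝒵 : Type*} [Fintype 𝒳] [Fintype 𝒵] (P : 𝒳 → 𝒴 → 𝒵 → ℝ) (y : 𝒴) : ℝ :=
  ∑ x, ∑ z, P x y z

/-- Marginal `P(z)`. -/
def margZ {𝒳 𝒴 𝒵 : Type*} [Fintype 𝒳] [Fintype 𝒴] (P : 𝒳 → 𝒴 → 𝒵 → ℝ) (z : 𝒵) : ℝ :=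
  ∑ x, ∑ y, P x y z

/-- Marginal `P(x,y)`. -/
def margXY {𝒳 𝒴 𝒵 : Type*} [Fintype 𝒵] (P : 𝒳 → 𝒴 → 𝒵 → ℝ) (x : 𝒳) (y : 𝒴) : ℝ :=
  ∑ z, P x y z

/-- Marginal `P(x,z)`. -/
def margXZ {𝒳 𝒴 𝒵 : Type*} [Fintype 𝒴] (P : 𝒳 → 𝒴 → 𝒵 → ℝ) (x : 𝒳) (z : 𝒵) : ℝ :=
  ∑ y, P x y z

/-- Marginal `P(y,z)`. -/
def margYZ {𝒳 𝒴 𝒵 : Type*} [Fintype 𝒳] (P : 𝒳 → 𝒴 → 𝒵 → ℝ) (y : 𝒴) (z : 𝒵) : ℝ :=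
  ∑ x, P x y z

/-- Conditional `P(x|y) = P(x,y)/P(y)`. -/
def condXY {𝒳 𝒴 𝒵 : Type*} [Fintype 𝒳] [Fintype 𝒵] (P : 𝒳 → 𝒴 → 𝒵 → ℝ) (x : 𝒳) (y : 𝒴) : ℝ :=
  margXY P x y / margY P y

/-- Conditional `P(x|z) = P(x,z)/P(z)`. -/
def condXZ {𝒳 𝒴 𝒵 : Type*} [Fintype 𝒳] [Fintype 𝒴] (P : 𝒳 → 𝒴 → 𝒵 → ℝ) (x : 𝒳) (z : 𝒵) : ℝ :=
  margXZ P x z / margZ P z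

/-- Conditional entropy `H(X|Y)`. -/
def condEntXY {𝒳 𝒴 𝒵 : Type*} [Fintype 𝒳] [Fintype 𝒴] [Fintype 𝒵] (P : 𝒳 → 𝒴 → 𝒵 → ℝ) : ℝ :=
  -∑ x, ∑ y, if 0 < margXY P x y then margXY P x y * Real.log (margXY P x y / margY P y) else 0

/-- Conditional entropy `H(X|Z)`. -/
def condEntXZ {𝒳 𝒴 𝒵 : Type*} [Fintype 𝒳] [Fintype 𝒴] [Fintype 𝒵] (P : 𝒳 → 𝒴 → 𝒵 → ℝ) : ℝ :=
  -∑ x, ∑ z, if 0 < margXZ P x z then margXZ P x z * Real.log (margXZ P x z / margZ P z) else 0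

/-- Expected divergence `ED(P_{X|Y} ‖ Q_{X|Z})`. -/
def EDY {𝒳 𝒴 𝒵 : Type*} [Fintype 𝒳] [Fintype 𝒴] [Fintype 𝒵]
    (P : 𝒳 → 𝒴 → 𝒵 → ℝ) (Q : 𝒵 → 𝒳 → ℝ) : ℝ :=
  ∑ y, ∑ z, if 0 < margYZ P y z then
      margYZ P y z *
        ∑ x, (if 0 < condXY P x y then condXY P x y * Real.log (condXY P x y / Q z x) else 0)
    else 0

/-- Expected divergence `ED(P_{X|Z} ‖ Q_{X|Z})`. -/
def EDZ {𝒳 𝒴 𝒵 : Type*} [Fintype 𝒳] [Fintype 𝒴] [Fintype 𝒵]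
    (P : 𝒳 → 𝒴 → 𝒵 → ℝ) (Q : 𝒵 → 𝒳 → ℝ) : ℝ :=
  ∑ z, if 0 < margZ P z then
      margZ P z *
        ∑ x, (if 0 < condXZ P x z then condXZ P x z * Real.log (condXZ P x z / Q z x) else 0)
    else 0

/-- `P` is a joint probability mass function. -/
def IsJointPMF {𝒳 𝒴 𝒵 : Type*} [Fintype 𝒳] [Fintype 𝒴] [Fintype 𝒵] (P : 𝒳 → 𝒴 → 𝒵 → ℝ) : Prop :=
  (∀ x y z, 0 ≤ P x y z) ∧ ∑ x, ∑ y, ∑ z, P x y z = 1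

/-- The Markov chain condition `X – Y – Z`: `P(x,y,z) P(y) = P(x,y) P(y,z)`. -/
def IsMarkov {𝒳 𝒴 𝒵 : Type*} [Fintype 𝒳] [Fintype 𝒴] [Fintype 𝒵] (P : 𝒳 → 𝒴 → 𝒵 → ℝ) : Prop :=
  ∀ x y z, P x y z * margY P y = margXY P x y * margYZ P y z

end

/-- The expected divergence as a single expectation under `P`; terms with `P(x,y,z) = 0` vanish, so
the positivity tests in `EDY` disappear. -/
lemma EDY_eq_sum {𝒳 𝒴 𝒵 : Type*} [Fintype 𝒳] [Fintype 𝒴] [Fintype 𝒵]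
    (P : 𝒳 → 𝒴 → 𝒵 → ℝ) (hP : ∀ x y z, 0 ≤ P x y z) (hMarkov : IsMarkov P)
    (Q : 𝒵 → 𝒳 → ℝ) (hQpos : ∀ z x, 0 < Q z x) :
    EDY P Q = ∑ y, ∑ z, ∑ x, P x y z * (log (condXY P x y) - log (Q z x)) := by
  unfold EDY
  refine sum_congr rfl fun y _ => sum_congr rfl fun z _ => ?_
  split_ifs with h
  · rw [mul_sum]
    refine sum_congr rfl fun x _ => ?_
    have hle : margYZ P y z ≤ margY P y :=
      sum_le_sum fun x _ => single_le_sum (fun z _ => hP x y z) (mem_univ z)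
    have hY : 0 < margY P y := h.trans_le hle
    have hfac : P x y z = margYZ P y z * condXY P x y := by
      have := hMarkov x y z
      unfold condXY
      field_simp
      linarith
    split_ifs with hc
    · rw [log_div hc.ne' (hQpos z x).ne', hfac]
      ring
    · have h0 : 0 ≤ condXY P x y :=
        div_nonneg (sum_nonneg fun z _ => hP x y z) hY.le
      have : condXY P x y = 0 := le_antisymm (not_lt.mp hc) h0
      rw [hfac, this]
      simp
  · have h0 : margYZ P y z = 0 :=
      le_antisymm (not_lt.mp h) (sum_nonneg fun x _ => hP x y z)
    have hx := (sum_eq_zero_iff_of_nonneg fun x _ => hP x y z).mp h0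
    exact (sum_eq_zero fun x hm => by rw [hx x hm, zero_mul]).symm

/-- The guard in an entropy sum may be dropped. -/
lemma ite_pos_mul_log {a b : ℝ} (ha : 0 ≤ a) :
    (if 0 < a then a * log (a / b) else 0) = a * log (a / b) := by
  split_ifs with h
  · rfl
  · rw [le_antisymm (not_lt.mp h) ha, zero_mul]

lemma condEntXY_eq_sum {𝒳 𝒴 𝒵 : Type*} [Fintype 𝒳] [Fintype 𝒴] [Fintype 𝒵]
    (P : 𝒳 → 𝒴 → 𝒵 → ℝ) (hP : ∀ x y z, 0 ≤ P x y z) :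
    condEntXY P = -∑ y, ∑ z, ∑ x, P x y z * log (condXY P x y) := by
  unfold condEntXY
  rw [sum_comm]
  congr 1
  refine sum_congr rfl fun y _ => ?_
  rw [sum_comm]
  refine sum_congr rfl fun x _ => ?_
  rw [ite_pos_mul_log (a := margXY P x y) (sum_nonneg fun z _ => hP x y z), ← sum_mul]
  rfl

lemma condEntXZ_eq_sum {𝒳 𝒴 𝒵 : Type*} [Fintype 𝒳] [Fintype 𝒴] [Fintype 𝒵]
    (P : 𝒳 → 𝒴 → 𝒵 → ℝ) (hP : ∀ x y z, 0 ≤ P x y z) :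
    condEntXZ P = -∑ z, ∑ x, margXZ P x z * log (condXZ P x z) := by
  unfold condEntXZ
  rw [sum_comm]
  congr 1
  refine sum_congr rfl fun z _ => sum_congr rfl fun x _ => ?_
  rw [ite_pos_mul_log (a := margXZ P x z) (sum_nonneg fun y _ => hP x y z)]
  rfl

/-- The tangent-line bound `a log (a / b) ≥ a - b` with `a = P(x,z)`, `b = P(z) Q(x|z)`. -/
lemma margXZ_mul_log_ge {𝒳 𝒴 𝒵 : Type*} [Fintype 𝒳] [Fintype 𝒴]
    (P : 𝒳 → 𝒴 → 𝒵 → ℝ) (hP : ∀ x y z, 0 ≤ P x y z) (x : 𝒳) (z : 𝒵) {q : ℝ} (hq : 0 < q) :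
    margXZ P x z - margZ P z * q ≤ margXZ P x z * (log (condXZ P x z) - log q) := by
  have ha : 0 ≤ margXZ P x z := sum_nonneg fun y _ => hP x y z
  have hle : margXZ P x z ≤ margZ P z :=
    single_le_sum (f := fun x => margXZ P x z)
      (fun x _ => sum_nonneg fun y _ => hP x y z) (mem_univ x)
  rcases ha.eq_or_lt with h | h
  · rw [← h] at hle ⊢
    nlinarith
  · have hZ : 0 < margZ P z := h.trans_le hle
    have hc : 0 < condXZ P x z := div_pos h hZ
    have hlog := log_le_sub_one_of_pos (div_pos hq hc)
    rw [log_div hq.ne' hc.ne'] at hlog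
    have hmul : margXZ P x z * (q / condXZ P x z) = margZ P z * q := by
      unfold condXZ
      field_simp
    nlinarith [mul_le_mul_of_nonneg_left hlog ha]

/-- **Role model theorem (inequality part).** If `X – Y – Z` is a Markov chain, then
`ED(P_{X|Y}‖Q_{X|Z}) ≥ H(X|Z) − H(X|Y)`. -/
theorem role_model_lower_bound {𝒳 𝒴 𝒵 : Type*} [Fintype 𝒳] [Fintype 𝒴] [Fintype 𝒵]
    [Nonempty 𝒳] [Nonempty 𝒴] [Nonempty 𝒵]
    (P : 𝒳 → 𝒴 → 𝒵 → ℝ) (hP : IsJointPMF P) (hMarkov : IsMarkov P)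
    (Q : 𝒵 → 𝒳 → ℝ) (hQpos : ∀ z x, 0 < Q z x) (hQsum : ∀ z, ∑ x, Q z x = 1) :
    EDY P Q ≥ condEntXZ P - condEntXY P := by
  obtain ⟨hP, -⟩ := hP
  have hQ : ∑ y, ∑ z, ∑ x, P x y z * log (Q z x) = ∑ z, ∑ x, margXZ P x z * log (Q z x) := by
    rw [sum_comm]
    refine sum_congr rfl fun z _ => ?_
    rw [sum_comm]
    exact sum_congr rfl fun x _ => (sum_mul _ _ _).symm
  have hgibbs : 0 ≤ ∑ z, ∑ x, margXZ P x z * (log (condXZ P x z) - log (Q z x)) := by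
    refine sum_nonneg fun z _ => ?_
    calc (0 : ℝ) = ∑ x, (margXZ P x z - margZ P z * Q z x) := by
          rw [sum_sub_distrib, ← mul_sum, hQsum, mul_one]
          exact (sub_self (margZ P z)).symm
      _ ≤ _ := sum_le_sum fun x _ => margXZ_mul_log_ge P hP x z (hQpos z x)
  rw [EDY_eq_sum P hP hMarkov Q hQpos, condEntXY_eq_sum P hP, condEntXZ_eq_sum P hP]
  simp only [mul_sub, sum_sub_distrib] at hgibbs ⊢
  linarith
end

section
/- Let 𝒳, 𝒴, 𝒵 be finite nonempty sets, let N ≥ 1, let y₁, …, y_N ∈ 𝒴 and z₁, …, z_N ∈ 𝒵 be given sequences, and let p(·|y) be a probability mass function on 𝒳 for each y ∈ 𝒴. For each z ∈ 𝒵 occurring in the sequence, define Q*(x|z) = (1/|{k : z_k = z}|) Σ_{k: z_k = z} p(x|y_k). Then for every family Q(·|z) of probability mass functions on 𝒳 with Q(x|z) > 0 for all x, z, it holds that Σ_{k=1}^N D(p(·|y_k)‖Q(·|z_k)) ≥ Σ_{k=1}^N D(p(·|y_k)‖Q*(·|z_k)); that is, the time average of the role model's a-posteriori distributions over the instants when z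 is observed minimizes the accumulated divergence. -/
/-!
Since `log t ≤ t - 1`, each instant satisfies
`D(p‖Q*) ≤ D(p‖Q) + (∑ x, p x * Q x / Q* x - 1)` (with `p = p(·|y_k)`, and `Q`, `Q*` taken at
`z_k`), so it suffices that the corrections sum to at most `0`. On the `n` instants with `z_k = z`
the `p(x|y_k)` sum to `n * Q*(x|z)`, so the factor `Q*` cancels and the sum of
`p x * Q x / Q* x` over these instants and all `x` is at most `n * ∑ x, Q(x|z) = n`.
-/

open Finset Real

noncomputable section

/-- `p` is a probability mass function on the finite set `𝒳`. -/
def IsPMF {𝒳 : Type*} [Fintype 𝒳] (p : 𝒳 → ℝ) : Prop :=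
  (∀ x, 0 ≤ p x) ∧ ∑ x, p x = 1

/-- Information divergence `D(p‖q) = Σ_{x : p(x)>0} p(x) log (p(x)/q(x))`. -/
def Dkl {𝒳 : Type*} [Fintype 𝒳] (p q : 𝒳 → ℝ) : ℝ :=
  ∑ x, if 0 < p x then p x * Real.log (p x / q x) else 0

end

/-- The time average `Q*(x|z)` of the role model's a-posteriori distributions over the
instants `k` with `z_k = z` minimizes the accumulated divergence
`Σ_k D(p(·|y_k) ‖ Q(·|z_k))`. -/
theorem time_average_minimizes_accumulated_divergence
    {𝒳 𝒴 𝒵 : Type*} [Fintype 𝒳] [Fintype 𝒴] [Fintype 𝒵]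
    [Nonempty 𝒳] [Nonempty 𝒴] [Nonempty 𝒵] [DecidableEq 𝒵]
    (N : ℕ) (hN : 1 ≤ N) (y : Fin N → 𝒴) (z : Fin N → 𝒵)
    (p : 𝒴 → 𝒳 → ℝ) (hp : ∀ y', IsPMF (p y'))
    (Qstar : 𝒵 → 𝒳 → ℝ)
    (hQstar : ∀ z₀ x, Qstar z₀ x =
      (∑ k ∈ Finset.univ.filter (fun k => z k = z₀), p (y k) x) /
        ((Finset.univ.filter (fun k => z k = z₀)).card : ℝ))
    (Q : 𝒵 → 𝒳 → ℝ) (hQ : ∀ z₀, IsPMF (Q z₀)) (hQpos : ∀ z₀ x, 0 < Q z₀ x) :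
    ∑ k, Dkl (p (y k)) (Q (z k)) ≥ ∑ k, Dkl (p (y k)) (Qstar (z k)) := by
  -- the total weight of `p / Qstar` against `Q` is at most the number of instants
  have key : ∑ k, ∑ x, p (y k) x * (Q (z k) x / Qstar (z k) x) ≤ ∑ k : Fin N, (1 : ℝ) := by
    rw [← Finset.sum_fiberwise (s := Finset.univ) (g := z) (f := fun _ : Fin N => (1 : ℝ)),
      ← Finset.sum_fiberwise (s := Finset.univ) (g := z)]
    refine Finset.sum_le_sum fun z₀ _ => ?_
    set S := Finset.univ.filter (fun k => z k = z₀) with hS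
    have h1 : ∑ k ∈ S, ∑ x, p (y k) x * (Q (z k) x / Qstar (z k) x)
        = ∑ x, (∑ k ∈ S, p (y k) x) * (Q z₀ x / Qstar z₀ x) := by
      rw [Finset.sum_comm]
      refine Finset.sum_congr rfl fun x _ => ?_
      rw [Finset.sum_mul]
      refine Finset.sum_congr rfl fun k hk => ?_
      rw [(Finset.mem_filter.mp hk).2]
    have h2 : ∑ k ∈ S, (1 : ℝ) = ∑ x, (S.card : ℝ) * Q z₀ x := by
      rw [← Finset.mul_sum, (hQ z₀).2]
      simp
    rw [h1, h2]
    refine Finset.sum_le_sum fun x _ => ?_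
    have hq := hQstar z₀ x
    rw [← hS] at hq
    have hnn : 0 ≤ (S.card : ℝ) * Q z₀ x := mul_nonneg (Nat.cast_nonneg _) (hQpos z₀ x).le
    -- where `Qstar` vanishes the left side is `0`; elsewhere equality holds
    by_cases h0 : Qstar z₀ x = 0
    · simpa [h0] using hnn
    · have hc : (S.card : ℝ) ≠ 0 := by
        intro hc
        rw [hc, div_zero] at hq
        exact h0 hq
      have hsum : ∑ k ∈ S, p (y k) x = S.card * Qstar z₀ x := by
        rw [hq]; field_simp
      rw [hsum]
      apply le_of_eq
      field_simp
  have hterm : ∀ k, Dkl (p (y k)) (Qstar (z k)) ≤ Dkl (p (y k)) (Q (z k)) +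
      (∑ x, p (y k) x * (Q (z k) x / Qstar (z k) x) - 1) := by
    intro k
    rw [← (hp (y k)).2, ← Finset.sum_sub_distrib, Dkl, Dkl, ← Finset.sum_add_distrib]
    refine Finset.sum_le_sum fun x _ => ?_
    split_ifs with h
    · have hs : 0 < Qstar (z k) x := by
        have hk : k ∈ Finset.univ.filter (fun j => z j = z k) := by simp
        rw [hQstar]
        exact div_pos (Finset.sum_pos' (fun j _ => (hp (y j)).1 x) ⟨k, hk, h⟩)
          (Nat.cast_pos.mpr (Finset.card_pos.mpr ⟨k, hk⟩))
      have hq := hQpos (z k) x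
      have hl := Real.log_le_sub_one_of_pos (div_pos hq hs)
      rw [Real.log_div hq.ne' hs.ne'] at hl
      rw [Real.log_div h.ne' hs.ne', Real.log_div h.ne' hq.ne']
      nlinarith [mul_le_mul_of_nonneg_left hl h.le]
    · have h0 : p (y k) x = 0 := le_antisymm (not_lt.mp h) ((hp (y k)).1 x)
      simp [h0]
  have := Finset.sum_le_sum fun k (_ : k ∈ Finset.univ) => hterm k
  rw [Finset.sum_add_distrib, Finset.sum_sub_distrib] at this
  linarith
end

section
/- Let 𝒳, 𝒴, 𝒵 be finite nonempty sets, let P be a joint probability mass function on 𝒳×𝒴×𝒵, and let Q(·|z) be a probability mass function on 𝒳 for each z ∈ 𝒵 with Q(x|z) > 0 for all x, z. Then ED(P_{X|Y}‖Q_{X|Z}) = −H(X|Y) − Σ_{z: P(z)>0} Σ_x (Σ_{y: P(y)>0} P(y,z)·P(x|y)) log Q(x|z); in particular, minimizing ED(P_{X|Y}‖Q_{X|Z}) over the family Q decomposes into, for each z ∈ 𝒵 separately, maximizing Σ_x (Σ_y P(y,z)·P(x|y)) log Q(x|z) over pmfs Q(·|z) on 𝒳. -/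
/-!
With the conventions `0 * log 0 = 0` and `P(x|y) = 0` when `P(y) = 0`, all the positivity guards in
the definitions can be dropped, because the guarded terms vanish anyway. Splitting
`log (P(x|y) / Q(x|z)) = log P(x|y) - log Q(x|z)` turns the expected divergence into
`∑ P(y,z) P(x|y) log P(x|y) - ∑ P(y,z) P(x|y) log Q(x|z)`. Summing over `z` in the first part
replaces `P(y,z)` by `P(y)`, and `P(y) P(x|y) = P(x,y)` gives `-H(X|Y)` (`condEntXY_eq`). The
second part is a sum over `z` of terms each involving only `Q(·|z)`, so that maximizing each of
them minimizes the divergence.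
-/

open Finset Real

section

variable {𝒳 𝒴 𝒵 : Type*} [Fintype 𝒳] [Fintype 𝒴] [Fintype 𝒵] {P : 𝒳 → 𝒴 → 𝒵 → ℝ}

lemma margXY_nonneg (hP : IsJointPMF P) (x : 𝒳) (y : 𝒴) : 0 ≤ margXY P x y :=
  sum_nonneg fun z _ => hP.1 x y z

lemma margYZ_nonneg (hP : IsJointPMF P) (y : 𝒴) (z : 𝒵) : 0 ≤ margYZ P y z :=
  sum_nonneg fun x _ => hP.1 x y z

lemma margY_eq_sum_margXY (y : 𝒴) : margY P y = ∑ x, margXY P x y := rfl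

lemma margY_eq_sum_margYZ (y : 𝒴) : margY P y = ∑ z, margYZ P y z := sum_comm

lemma margZ_eq_sum_margYZ (z : 𝒵) : margZ P z = ∑ y, margYZ P y z := sum_comm

lemma margY_nonneg (hP : IsJointPMF P) (y : 𝒴) : 0 ≤ margY P y :=
  sum_nonneg fun x _ => margXY_nonneg hP x y

lemma condXY_nonneg (hP : IsJointPMF P) (x : 𝒳) (y : 𝒴) : 0 ≤ condXY P x y :=
  div_nonneg (margXY_nonneg hP x y) (margY_nonneg hP y)

/-- `P(y) P(x|y) = P(x,y)`, also when `P(y) = 0`, since then `P(x,y) = 0`. -/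
lemma margY_mul_condXY (hP : IsJointPMF P) (x : 𝒳) (y : 𝒴) :
    margY P y * condXY P x y = margXY P x y := by
  refine mul_div_cancel_of_imp' fun h => ?_
  rw [margY_eq_sum_margXY, sum_eq_zero_iff_of_nonneg fun x _ => margXY_nonneg hP x y] at h
  exact h x (mem_univ x)

/-- `H(X|Y) = -∑ P(y,z) P(x|y) log P(x|y)`, with all guards dropped. -/
lemma condEntXY_eq (hP : IsJointPMF P) :
    condEntXY P = -∑ y, ∑ z, ∑ x, margYZ P y z * (condXY P x y * log (condXY P x y)) := by
  unfold condEntXY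
  rw [sum_comm]
  congr 1
  refine sum_congr rfl fun y _ => ?_
  rw [sum_comm]
  refine sum_congr rfl fun x _ => ?_
  rw [← sum_mul, ← margY_eq_sum_margYZ, ← mul_assoc, margY_mul_condXY hP]
  split_ifs with h
  · rfl
  · rw [le_antisymm (not_lt.1 h) (margXY_nonneg hP x y), zero_mul]

/-- The expected divergence with all guards dropped and the logarithm split. -/
lemma EDY_eq (hP : IsJointPMF P) {Q : 𝒵 → 𝒳 → ℝ} (hQ : ∀ z x, 0 < Q z x) :
    EDY P Q = ∑ y, ∑ z, ∑ x, margYZ P y z * (condXY P x y * log (condXY P x y)) -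
      ∑ y, ∑ z, ∑ x, margYZ P y z * condXY P x y * log (Q z x) := by
  simp only [EDY, ← sum_sub_distrib]
  refine sum_congr rfl fun y _ => sum_congr rfl fun z _ => ?_
  split_ifs with h
  · rw [mul_sum]
    refine sum_congr rfl fun x _ => ?_
    split_ifs with hc
    · rw [log_div hc.ne' (hQ z x).ne']
      ring
    · simp [le_antisymm (not_lt.1 hc) (condXY_nonneg hP x y)]
  · simp [le_antisymm (not_lt.1 h) (margYZ_nonneg hP y z)]

/-- The cross-entropy sum, with the guards `P(y) > 0` and `P(z) > 0` dropped. -/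
lemma cross_eq (hP : IsJointPMF P) (Q : 𝒵 → 𝒳 → ℝ) :
    (∑ z, (if 0 < margZ P z then
        ∑ x, (∑ y, if 0 < margY P y then margYZ P y z * condXY P x y else 0) *
          Real.log (Q z x)
      else 0)) = ∑ y, ∑ z, ∑ x, margYZ P y z * condXY P x y * log (Q z x) := by
  rw [sum_comm (s := (univ : Finset 𝒴))]
  refine sum_congr rfl fun z _ => ?_
  split_ifs with h
  · rw [sum_comm (s := (univ : Finset 𝒴))]
    refine sum_congr rfl fun x _ => ?_
    rw [sum_mul]
    refine sum_congr rfl fun y _ => ?_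
    split_ifs with hy
    · rfl
    -- here `P(y) = 0`, so `P(x|y)` is a division by zero
    · simp [condXY, le_antisymm (not_lt.1 hy) (margY_nonneg hP y)]
  · rw [margZ_eq_sum_margYZ] at h
    have h0 := le_antisymm (not_lt.1 h) (sum_nonneg fun y _ => margYZ_nonneg hP y z)
    rw [sum_eq_zero_iff_of_nonneg fun y _ => margYZ_nonneg hP y z] at h0
    simp [fun y => h0 y (mem_univ y)]

end

/-- **Decomposition of the expected divergence.**
`ED(P_{X|Y}‖Q_{X|Z}) = −H(X|Y) − Σ_{z:P(z)>0} Σ_x (Σ_{y:P(y)>0} P(y,z) P(x|y)) log Q(x|z)`;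
in particular minimizing `ED` decomposes, for each `z` separately, into maximizing
`Σ_x (Σ_y P(y,z) P(x|y)) log Q(x|z)` over pmfs `Q(·|z)`. -/
theorem ED_decomposition {𝒳 𝒴 𝒵 : Type*} [Fintype 𝒳] [Fintype 𝒴] [Fintype 𝒵]
    [Nonempty 𝒳] [Nonempty 𝒴] [Nonempty 𝒵]
    (P : 𝒳 → 𝒴 → 𝒵 → ℝ) (hP : IsJointPMF P)
    (Q : 𝒵 → 𝒳 → ℝ) (hQpos : ∀ z x, 0 < Q z x) (hQsum : ∀ z, ∑ x, Q z x = 1) :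
    (EDY P Q = -condEntXY P -
      ∑ z, (if 0 < margZ P z then
        ∑ x, (∑ y, if 0 < margY P y then margYZ P y z * condXY P x y else 0) *
          Real.log (Q z x)
      else 0)) ∧
    (∀ Q' : 𝒵 → 𝒳 → ℝ, (∀ z x, 0 < Q' z x) → (∀ z, ∑ x, Q' z x = 1) →
      (∀ z : 𝒵,
        (∑ x, (∑ y, if 0 < margY P y then margYZ P y z * condXY P x y else 0) *
            Real.log (Q' z x)) ≤
        (∑ x, (∑ y, if 0 < margY P y then margYZ P y z * condXY P x y else 0) *
            Real.log (Q z x))) →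
      EDY P Q ≤ EDY P Q') := by
  have key : ∀ R : 𝒵 → 𝒳 → ℝ, (∀ z x, 0 < R z x) → EDY P R = -condEntXY P -
      ∑ z, (if 0 < margZ P z then
        ∑ x, (∑ y, if 0 < margY P y then margYZ P y z * condXY P x y else 0) *
          Real.log (R z x)
      else 0) := fun R hR => by
    rw [EDY_eq hP hR, condEntXY_eq hP, cross_eq hP, neg_neg]
  refine ⟨key Q hQpos, fun Q' hQ' _ hle => ?_⟩
  rw [key Q hQpos, key Q' hQ']
  refine sub_le_sub_left (sum_le_sum fun z _ => ?_) _
  split_ifs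
  · exact hle z
  · exact le_rfl
end
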